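/- arXiv:cs/0312045 — 7 statements merged into one kernel-verified Lean document; each statement's English description precedes it below -/
import Mathlib

section
/- For any weight constraint C and any consistent set Z of literals, Z ⊨ [C] if and only if Z ⊨ C. -/
open Classical

/-- A literal: a propositional atom `a` or its classical negation `¬ a`. -/
inductive Lit (α : Type) where
  | pos : α → Lit α
  | neg : α → Lit α

/-- The atom of a literal. -/
def Lit.atom {α : Type} : Lit α → α
  | .pos a => a
  | .neg a => a

/-- Mapping literals along a map of atoms. -/
def Lit.map {α β : Type} (f : α → β) : Lit α → Lit β
  | .pos a => .pos (f a)
  | .neg a => .neg (f a)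

/-- A set of literals is consistent if it contains no pair `a`, `¬ a`. -/
def LitConsistent {α : Type} (Z : Set (Lit α)) : Prop :=
  ∀ a : α, ¬(Lit.pos a ∈ Z ∧ Lit.neg a ∈ Z)

/-- Formulas (nested expressions): elementary formulas are literals, `⊥` and `⊤`;
formulas are built from them using negation as failure `naf`, conjunction `conj`
and disjunction `disj`. -/
inductive Formula (α : Type) where
  | lit : Lit α → Formula α
  | fbot : Formula α
  | ftop : Formula α
  | naf : Formula α → Formula α
  | conj : Formula α → Formula α → Formula α
  | disj : Formula α → Formula α → Formula α

/-- Satisfaction of a formula by a set of literals. -/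
def Formula.sat {α : Type} (Z : Set (Lit α)) : Formula α → Prop
  | .lit l => l ∈ Z
  | .fbot => False
  | .ftop => True
  | .naf F => ¬ F.sat Z
  | .conj F G => F.sat Z ∧ G.sat Z
  | .disj F G => F.sat Z ∨ G.sat Z

/-- A rule with nested expressions: `head ← body`. -/
structure NRule (α : Type) where
  head : Formula α
  body : Formula α

/-- `Z` satisfies a program (a set of rules). -/
def progSat {α : Type} (Z : Set (Lit α)) (P : Set (NRule α)) : Prop :=
  ∀ r ∈ P, r.body.sat Z → r.head.sat Z

/-- The reduct `F^Z` of a formula relative to a set of literals `Z`. -/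
noncomputable def Formula.reduct {α : Type} (Z : Set (Lit α)) : Formula α → Formula α
  | .lit l => .lit l
  | .fbot => .fbot
  | .ftop => .ftop
  | .naf F => if F.sat Z then .fbot else .ftop
  | .conj F G => .conj (F.reduct Z) (G.reduct Z)
  | .disj F G => .disj (F.reduct Z) (G.reduct Z)

/-- The reduct `Π^Z` of a program. -/
noncomputable def progReduct {α : Type} (Z : Set (Lit α)) (P : Set (NRule α)) : Set (NRule α) :=
  (fun r : NRule α => NRule.mk (r.head.reduct Z) (r.body.reduct Z)) '' P

/-- `Z` is minimal (under inclusion) among the consistent sets of literals satisfying `P`. -/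
def MinimalSat {α : Type} (Z : Set (Lit α)) (P : Set (NRule α)) : Prop :=
  LitConsistent Z ∧ progSat Z P ∧
    ∀ Z' : Set (Lit α), LitConsistent Z' → progSat Z' P → Z' ⊆ Z → Z' = Z

/-- `Z` is an answer set for a program `P` with nested expressions:
`Z` is minimal among the consistent sets satisfying the reduct `P^Z`. -/
def AnswerSet {α : Type} (Z : Set (Lit α)) (P : Set (NRule α)) : Prop :=
  MinimalSat Z (progReduct Z P)

/-- Strong equivalence of programs with nested expressions. -/
def StrongEq {α : Type} (P₁ P₂ : Set (NRule α)) : Prop :=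
  ∀ P : Set (NRule α), ∀ Z : Set (Lit α), AnswerSet Z (P₁ ∪ P) ↔ AnswerSet Z (P₂ ∪ P)

/-- Multiple conjunction (the empty conjunction is `⊤`). -/
def bigConj {α : Type} : List (Formula α) → Formula α
  | [] => .ftop
  | F :: Fs => .conj F (bigConj Fs)

/-- Multiple disjunction (the empty disjunction is `⊥`). -/
def bigDisj {α : Type} : List (Formula α) → Formula α
  | [] => .fbot
  | F :: Fs => .disj F (bigDisj Fs)

/-- `⟨F₁,…,F_n⟩:X`: the disjunction over `I ∈ X` of the conjunctions of the `Fᵢ`, `i ∈ I`. -/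
noncomputable def angled {α : Type} {n : ℕ} (F : Fin n → Formula α) (X : Finset (Finset (Fin n))) :
    Formula α :=
  bigDisj (X.toList.map fun I => bigConj (I.toList.map F))
/-- A rule element: a literal (positive rule element) or a literal
prefixed with negation as failure (negative rule element). -/
inductive RElem (α : Type) where
  | pos : Lit α → RElem α
  | neg : Lit α → RElem α

/-- Satisfaction of a rule element by a set of literals. -/
def RElem.sat {α : Type} (Z : Set (Lit α)) : RElem α → Prop
  | .pos l => l ∈ Z
  | .neg l => l ∉ Z

/-- Whether a rule element is negative. -/
def RElem.isNegB {α : Type} : RElem α → Bool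
  | .pos _ => false
  | .neg _ => true

/-- The sum of the weights of the entries of `S` that are satisfied by `Z`. -/
noncomputable def weightSum {α : Type} (Z : Set (Lit α)) (S : List (RElem α × ℝ)) : ℝ :=
  (S.map fun p => if p.1.sat Z then p.2 else 0).sum

/-- A weight constraint `L ≤ {c₁=w₁,…,c_m=w_m} ≤ U` with nonnegative weights;
`L` and `U` may be `−∞`/`+∞`. -/
structure WConstraint (α : Type) where
  L : EReal
  S : List (RElem α × ℝ)
  U : EReal
  nonneg : ∀ p ∈ S, (0 : ℝ) ≤ p.2

/-- `Z` satisfies the weight constraint `L ≤ S ≤ U`. -/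
def WConstraint.sat {α : Type} (Z : Set (Lit α)) (C : WConstraint α) : Prop :=
  C.L ≤ (weightSum Z C.S : EReal) ∧ (weightSum Z C.S : EReal) ≤ C.U

/-- A rule with weight constraints, `C₀ ← C₁,…,C_n`. -/
structure WRule (α : Type) where
  head : WConstraint α
  body : List (WConstraint α)

/-- `Z` satisfies a program with weight constraints. -/
def wProgSat {α : Type} (Z : Set (Lit α)) (Ω : Set (WRule α)) : Prop :=
  ∀ R ∈ Ω, (∀ C ∈ R.body, C.sat Z) → R.head.sat Z

/-- A weight constraint of the form `L ≤ S` (no upper bound), with nonnegative weights. -/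
structure LConstraint (α : Type) where
  L : EReal
  S : List (RElem α × ℝ)
  nonneg : ∀ p ∈ S, (0 : ℝ) ≤ p.2

/-- Satisfaction of a lower-bound constraint (by an arbitrary set of literals). -/
def LConstraint.sat {α : Type} (Z : Set (Lit α)) (C : LConstraint α) : Prop :=
  C.L ≤ (weightSum Z C.S : EReal)

/-- A Horn rule: a literal as head, lower-bound constraints as body. -/
structure HornRule (α : Type) where
  head : Lit α
  body : List (LConstraint α)

/-- Satisfaction of a set of Horn rules by an arbitrary set of literals. -/
def hornSat {α : Type} (Z : Set (Lit α)) (P : Set (HornRule α)) : Prop :=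
  ∀ r ∈ P, (∀ C ∈ r.body, C.sat Z) → r.head ∈ Z

/-- The deductive closure of a set of Horn rules: its unique minimal satisfying
set of literals (the intersection of all satisfying sets). -/
def cl {α : Type} (P : Set (HornRule α)) : Set (Lit α) :=
  ⋂₀ {Z : Set (Lit α) | hornSat Z P}

/-- The sum of the weights of the negative entries of `S` satisfied by `Z`. -/
noncomputable def negSatWeight {α : Type} (Z : Set (Lit α)) (S : List (RElem α × ℝ)) : ℝ :=
  (S.map fun p => if p.1.isNegB = true ∧ p.1.sat Z then p.2 else 0).sum

/-- The reduct `(L ≤ S)^Z` of a lower-bound constraint: drop the negative entries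
of `S` and decrease `L` by the total weight of the negative entries satisfied by `Z`. -/
noncomputable def LConstraint.reduct {α : Type} (Z : Set (Lit α)) (C : LConstraint α) :
    LConstraint α :=
  ⟨C.L - ((negSatWeight Z C.S : ℝ) : EReal),
   C.S.filter (fun p => !p.1.isNegB),
   fun p hp => C.nonneg p (List.mem_of_mem_filter hp)⟩

/-- The lower-bound part `L ≤ S` of a weight constraint `L ≤ S ≤ U`. -/
def WConstraint.lower {α : Type} (C : WConstraint α) : LConstraint α :=
  ⟨C.L, C.S, C.nonneg⟩

/-- The positive rule elements (as literals) occurring in `S`. -/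
def posElems {α : Type} (S : List (RElem α × ℝ)) : Set (Lit α) :=
  {l : Lit α | ∃ w : ℝ, (RElem.pos l, w) ∈ S}

/-- The reduct `Ω^Z` of a program with weight constraints: for each rule
`L₀≤S₀≤U₀ ← C₁,…,C_n` whose upper bounds are all satisfied by `Z`, the Horn rules
`l ← C₁^Z,…,C_n^Z` for all positive rule elements `l` of `S₀` with `l ∈ Z`. -/
noncomputable def wProgReduct {α : Type} (Z : Set (Lit α)) (Ω : Set (WRule α)) :
    Set (HornRule α) :=
  { r : HornRule α | ∃ R ∈ Ω,
      (∀ C ∈ R.body, (weightSum Z C.S : EReal) ≤ C.U) ∧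
      r.head ∈ posElems R.head.S ∧ r.head ∈ Z ∧
      r.body = R.body.map (fun C => C.lower.reduct Z) }

/-- `Z` is an answer set for the program `Ω` with weight constraints. -/
def WAnswerSet {α : Type} (Z : Set (Lit α)) (Ω : Set (WRule α)) : Prop :=
  LitConsistent Z ∧ wProgSat Z Ω ∧ cl (wProgReduct Z Ω) = Z

/-- Strong equivalence of programs with weight constraints. -/
def WStrongEq {α : Type} (Ω₁ Ω₂ : Set (WRule α)) : Prop :=
  ∀ Ω : Set (WRule α), ∀ Z : Set (Lit α), WAnswerSet Z (Ω₁ ∪ Ω) ↔ WAnswerSet Z (Ω₂ ∪ Ω)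

/-- A rule element as a formula: `l` becomes the literal `l`, `not l` becomes `naf l`. -/
def RElem.toFormula {α : Type} : RElem α → Formula α
  | .pos l => .lit l
  | .neg l => .naf (.lit l)

/-- The translation `[L ≤ S]`: the formula `⟨c₁,…,c_m⟩:{I : L ≤ Σ_{i∈I} wᵢ}`. -/
noncomputable def trLower {α : Type} (L : EReal) (S : List (RElem α × ℝ)) : Formula α :=
  angled (fun i : Fin S.length => (S.get i).1.toFormula)
    (Finset.univ.filter fun I : Finset (Fin S.length) =>
      L ≤ ((∑ i ∈ I, (S.get i).2 : ℝ) : EReal))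

/-- The translation `[S ≤ U]`: the formula `not ⟨c₁,…,c_m⟩:{I : U < Σ_{i∈I} wᵢ}`. -/
noncomputable def trUpper {α : Type} (S : List (RElem α × ℝ)) (U : EReal) : Formula α :=
  .naf (angled (fun i : Fin S.length => (S.get i).1.toFormula)
    (Finset.univ.filter fun I : Finset (Fin S.length) =>
      U < ((∑ i ∈ I, (S.get i).2 : ℝ) : EReal)))

/-- The translation `[L ≤ S ≤ U] = [L ≤ S],[S ≤ U]`. -/
noncomputable def trWC {α : Type} (C : WConstraint α) : Formula α :=
  .conj (trLower C.L C.S) (trUpper C.S C.U)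

/-- The formulas `l ; not l` for the positive rule elements `l` of `S`, in order. -/
def choiceFmls {α : Type} (S : List (RElem α × ℝ)) : List (Formula α) :=
  S.filterMap fun p =>
    match p.1 with
    | RElem.pos l => some (Formula.disj (.lit l) (.naf (.lit l)))
    | RElem.neg _ => none

/-- The translation of a rule with weight constraints `C₀ ← C₁,…,C_n`:
`(l₁; not l₁),…,(l_p; not l_p),[C₀] ← [C₁],…,[C_n]`. -/
noncomputable def trRule {α : Type} (R : WRule α) : NRule α :=
  ⟨bigConj (choiceFmls R.head.S ++ [trWC R.head]), bigConj (R.body.map trWC)⟩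

/-- The translation `[Ω]` of a program with weight constraints. -/
noncomputable def trProg {α : Type} (Ω : Set (WRule α)) : Set (NRule α) :=
  trRule '' Ω

/-- The nondisjunctive translation `[Ω]^{nd}`: each rule `C₀ ← C₁,…,C_n` is replaced
by the rules `l ← not not l, [C₁],…,[C_n]` for all positive rule elements `l` of `C₀`
together with `⊥ ← not [C₀], [C₁],…,[C_n]`. -/
noncomputable def ndTrans {α : Type} (Ω : Set (WRule α)) : Set (NRule α) :=
  { r : NRule α | ∃ R ∈ Ω,
      (∃ l ∈ posElems R.head.S,
        r = ⟨.lit l, bigConj (.naf (.naf (.lit l)) :: R.body.map trWC)⟩) ∨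
      r = ⟨.fbot, bigConj (.naf (trWC R.head) :: R.body.map trWC)⟩ }

/-!
The formula `⟨c₁,…,c_m⟩:X` is satisfied by `Z` iff some `I ∈ X` lies inside the set `T` of indices
`i` with `Z ⊨ cᵢ`. Both `[L ≤ S]` and the formula negated in `[S ≤ U]` take for `X` the sets whose
total weight satisfies an upward closed condition. Since weights are nonnegative, `T` is the
heaviest of its subsets, so such an `I` exists iff `T` itself belongs to `X`; and the weight of `T`
is the sum on which satisfaction of the weight constraint depends.
-/

theorem exists_subset_sum_iff {ι M : Type*} [AddCommMonoid M] [Preorder M] [AddLeftMono M]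
    {t : Finset ι} {w : ι → M} (hw : ∀ i ∈ t, 0 ≤ w i) {P : M → Prop} (hP : Monotone P) :
    (∃ I ⊆ t, P (∑ i ∈ I, w i)) ↔ P (∑ i ∈ t, w i) := by
  constructor
  · rintro ⟨I, hIt, hI⟩
    exact hP (Finset.sum_le_sum_of_subset_of_nonneg hIt fun i hi _ => hw i hi) hI
  · exact fun ht => ⟨t, Finset.Subset.rfl, ht⟩

section Satisfaction

variable {α : Type} {Z : Set (Lit α)}

theorem sat_bigConj_iff {Fs : List (Formula α)} : (bigConj Fs).sat Z ↔ ∀ F ∈ Fs, F.sat Z := by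
  induction Fs with
  | nil => simp [bigConj, Formula.sat]
  | cons F Fs ih => simp [bigConj, Formula.sat, ih]

theorem sat_bigDisj_iff {Fs : List (Formula α)} : (bigDisj Fs).sat Z ↔ ∃ F ∈ Fs, F.sat Z := by
  induction Fs with
  | nil => simp [bigDisj, Formula.sat]
  | cons F Fs ih => simp [bigDisj, Formula.sat, ih]

theorem sat_angled_iff {n : ℕ} {F : Fin n → Formula α} {X : Finset (Finset (Fin n))} :
    (angled F X).sat Z ↔ ∃ I ∈ X, ∀ i ∈ I, (F i).sat Z := by
  simp [angled, sat_bigDisj_iff, sat_bigConj_iff]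

theorem sat_toFormula_iff {c : RElem α} : c.toFormula.sat Z ↔ c.sat Z := by
  cases c <;> rfl

end Satisfaction

section WeightBounds

variable {α : Type} {Z : Set (Lit α)} {S : List (RElem α × ℝ)}

/-- The set of indices `i` with `Z ⊨ cᵢ`, where `S = {c₁=w₁,…,c_m=w_m}`: the largest index set
whose conjunction of rule elements is satisfied by `Z`. Indices are positions in the list `S`, so
repeated entries are counted separately. -/
noncomputable def satIndices (Z : Set (Lit α)) (S : List (RElem α × ℝ)) :
    Finset (Fin S.length) :=
  {i | (S.get i).1.sat Z}

theorem subset_satIndices_iff {I : Finset (Fin S.length)} :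
    I ⊆ satIndices Z S ↔ ∀ i ∈ I, (S.get i).1.sat Z := by
  simp only [satIndices, Finset.subset_iff, Finset.mem_filter_univ]

theorem sum_satIndices (Z : Set (Lit α)) (S : List (RElem α × ℝ)) :
    ∑ i ∈ satIndices Z S, (S.get i).2 = weightSum Z S := by
  rw [satIndices, Finset.sum_filter, weightSum]
  exact Fin.sum_univ_fun_getElem S fun p => if p.1.sat Z then p.2 else 0

theorem sat_angled_weight_iff (hS : ∀ p ∈ S, 0 ≤ p.2) {P : ℝ → Prop} (hP : Monotone P)
    [DecidablePred fun I : Finset (Fin S.length) => P (∑ i ∈ I, (S.get i).2)] :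
    (angled (fun i : Fin S.length => (S.get i).1.toFormula)
      {I : Finset (Fin S.length) | P (∑ i ∈ I, (S.get i).2)}).sat Z ↔ P (weightSum Z S) := by
  calc
    _ ↔ ∃ I, P (∑ i ∈ I, (S.get i).2) ∧ ∀ i ∈ I, (S.get i).1.sat Z := by
      simp only [sat_angled_iff, sat_toFormula_iff, Finset.mem_filter_univ]
    _ ↔ ∃ I ⊆ satIndices Z S, P (∑ i ∈ I, (S.get i).2) := by
      simp only [subset_satIndices_iff, and_comm]
    _ ↔ P (∑ i ∈ satIndices Z S, (S.get i).2) :=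
      exists_subset_sum_iff (fun i _ => hS _ (S.get_mem i)) hP
    _ ↔ P (weightSum Z S) := by rw [sum_satIndices]

theorem sat_trLower_iff (hS : ∀ p ∈ S, 0 ≤ p.2) {L : EReal} :
    (trLower L S).sat Z ↔ L ≤ (weightSum Z S : EReal) :=
  sat_angled_weight_iff hS (P := fun x => L ≤ (x : EReal))
    fun _ _ hxy hL => hL.trans (EReal.coe_le_coe hxy)

theorem sat_trUpper_iff (hS : ∀ p ∈ S, 0 ≤ p.2) {U : EReal} :
    (trUpper S U).sat Z ↔ (weightSum Z S : EReal) ≤ U :=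
  (not_congr <| sat_angled_weight_iff hS (P := fun x => U < (x : EReal))
    fun _ _ hxy hU => hU.trans_le (EReal.coe_le_coe hxy)).trans not_lt

end WeightBounds

theorem sat_trWC_iff_general {α : Type} (C : WConstraint α) (Z : Set (Lit α)) :
    (trWC C).sat Z ↔ C.sat Z :=
  and_congr (sat_trLower_iff C.nonneg) (sat_trUpper_iff C.nonneg)

/-- For any weight constraint `C` and any consistent set `Z` of literals,
`Z ⊨ [C]` iff `Z ⊨ C`. -/
theorem sat_trWC_iff (C : WConstraint ℕ) (Z : Set (Lit ℕ)) (hZ : LitConsistent Z) :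
    (trWC C).sat Z ↔ C.sat Z :=
  sat_trWC_iff_general C Z
end

section
/- For any weight constraint of the form L ≤ S and any consistent sets Z and Z' of literals, Z' ⊨ [L ≤ S]^Z if and only if Z' ⊨ (L ≤ S)^Z. -/
open Classical

/-!
Evaluated in `Z'`, the formula `[L ≤ S]^Z` asks for a set of indices `i` with `Z' ⊨ cᵢ^Z` whose
total weight is at least `L`. Weights being nonnegative, the set of all `i` with `Z' ⊨ cᵢ^Z` is the
best candidate, so the condition is `L ≤ ∑ wᵢ` over that set. The reduct `cᵢ^Z` is `cᵢ` itself for a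
positive `cᵢ` and a constant decided by `Z` for a negative one; moving the part of the sum
contributed by the negative elements to the side of `L` gives `(L ≤ S)^Z`.
-/

theorem exists_sum_mem_iff_sum_filter_mem {ι M : Type*} [Fintype ι] [AddCommMonoid M]
    [PartialOrder M] [IsOrderedAddMonoid M] {w : ι → M} {t : Set M} (ht : IsUpperSet t)
    (hw : ∀ i, 0 ≤ w i) (P : ι → Prop) [DecidablePred P] :
    (∃ I : Finset ι, ∑ i ∈ I, w i ∈ t ∧ ∀ i ∈ I, P i) ↔ ∑ i with P i, w i ∈ t := by
  constructor
  · rintro ⟨I, hI, hP⟩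
    have hsub : I ⊆ Finset.univ.filter P := fun i hi => by simpa using hP i hi
    exact ht (Finset.sum_le_sum_of_subset_of_nonneg hsub fun i _ _ => hw i) hI
  · intro h
    exact ⟨_, h, fun i hi => (Finset.mem_filter.1 hi).2⟩

section Reduct

variable {α : Type} (Z Z' : Set (Lit α))

theorem sat_reduct_bigConj (Fs : List (Formula α)) :
    ((bigConj Fs).reduct Z).sat Z' ↔ ∀ F ∈ Fs, (F.reduct Z).sat Z' := by
  induction Fs with
  | nil => simp [bigConj, Formula.reduct, Formula.sat]
  | cons F Fs ih => simp [bigConj, Formula.reduct, Formula.sat, ih]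

theorem sat_reduct_bigDisj (Fs : List (Formula α)) :
    ((bigDisj Fs).reduct Z).sat Z' ↔ ∃ F ∈ Fs, (F.reduct Z).sat Z' := by
  induction Fs with
  | nil => simp [bigDisj, Formula.reduct, Formula.sat]
  | cons F Fs ih => simp [bigDisj, Formula.reduct, Formula.sat, ih]

theorem sat_reduct_angled {n : ℕ} (F : Fin n → Formula α) (X : Finset (Finset (Fin n))) :
    ((angled F X).reduct Z).sat Z' ↔ ∃ I ∈ X, ∀ i ∈ I, ((F i).reduct Z).sat Z' := by
  simp [angled, sat_reduct_bigDisj, sat_reduct_bigConj]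

theorem sat_reduct_toFormula_pos (l : Lit α) :
    ((RElem.pos l).toFormula.reduct Z).sat Z' ↔ (RElem.pos l).sat Z' :=
  Iff.rfl

theorem sat_reduct_toFormula_neg (l : Lit α) :
    ((RElem.neg l).toFormula.reduct Z).sat Z' ↔ (RElem.neg l).sat Z := by
  by_cases hl : l ∈ Z <;> simp [RElem.toFormula, RElem.sat, Formula.reduct, Formula.sat, hl]

/-- The sum `∑ wⱼ` over the entries `cⱼ = wⱼ` of `S` with `Z' ⊨ cⱼ^Z`, where the rule element `cⱼ`
is read as a formula. It is the common value against which both reducts compare `L`. -/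
noncomputable def reductWeightSum (S : List (RElem α × ℝ)) : ℝ :=
  (S.map fun p => if (p.1.toFormula.reduct Z).sat Z' then p.2 else 0).sum

theorem reductWeightSum_eq_sum_filter (S : List (RElem α × ℝ)) :
    reductWeightSum Z Z' S =
      ∑ i : Fin S.length with ((S.get i).1.toFormula.reduct Z).sat Z', (S.get i).2 := by
  rw [Finset.sum_filter]
  exact (Fin.sum_univ_fun_getElem S _).symm

theorem reductWeightSum_eq_weightSum_add_negSatWeight (S : List (RElem α × ℝ)) :
    reductWeightSum Z Z' S = weightSum Z' (S.filter fun p => !p.1.isNegB) + negSatWeight Z S := by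
  induction S with
  | nil => simp [reductWeightSum, weightSum, negSatWeight]
  | cons p S ih =>
    obtain ⟨c, w⟩ := p
    simp only [reductWeightSum, weightSum, negSatWeight] at ih ⊢
    cases c with
    | pos l => simp [ih, sat_reduct_toFormula_pos, RElem.isNegB, add_assoc]
    | neg l => simp [ih, sat_reduct_toFormula_neg, RElem.isNegB, add_left_comm]

theorem sat_reduct_trLower_iff_le_reductWeightSum (L : EReal) {S : List (RElem α × ℝ)}
    (hS : ∀ p ∈ S, 0 ≤ p.2) :
    ((trLower L S).reduct Z).sat Z' ↔ L ≤ (reductWeightSum Z Z' S : EReal) := by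
  have hw (i : Fin S.length) : 0 ≤ (S.get i).2 := hS _ (S.get_mem i)
  have hL : IsUpperSet {x : ℝ | L ≤ x} := fun x y hxy hx =>
    le_trans hx (EReal.coe_le_coe_iff.2 hxy)
  simpa [trLower, sat_reduct_angled, reductWeightSum_eq_sum_filter] using
    exists_sum_mem_iff_sum_filter_mem hL hw fun i => ((S.get i).1.toFormula.reduct Z).sat Z'

theorem LConstraint.sat_reduct_iff_le_reductWeightSum (C : LConstraint α) :
    (C.reduct Z).sat Z' ↔ C.L ≤ (reductWeightSum Z Z' C.S : EReal) := by
  rw [LConstraint.sat, LConstraint.reduct, reductWeightSum_eq_weightSum_add_negSatWeight,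
    EReal.coe_add, EReal.sub_le_iff_le_add (by simp) (by simp)]

theorem sat_reduct_trLower_iff_general (C : LConstraint α) :
    ((trLower C.L C.S).reduct Z).sat Z' ↔ (C.reduct Z).sat Z' :=
  (sat_reduct_trLower_iff_le_reductWeightSum Z Z' C.L C.nonneg).trans
    (C.sat_reduct_iff_le_reductWeightSum Z Z').symm

end Reduct

/-- For any constraint `L ≤ S` and consistent sets `Z`, `Z'` of literals,
`Z' ⊨ [L ≤ S]^Z` iff `Z' ⊨ (L ≤ S)^Z`. -/
theorem sat_reduct_trLower_iff (C : LConstraint ℕ) (Z Z' : Set (Lit ℕ))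
    (hZ : LitConsistent Z) (hZ' : LitConsistent Z') :
    ((trLower C.L C.S).reduct Z).sat Z' ↔ (C.reduct Z).sat Z' :=
  sat_reduct_trLower_iff_general Z Z' C
end

section
/- For any weight constraint of the form S ≤ U and any consistent set Z of literals, the reduct [S ≤ U]^Z equals the formula ⊤ if Z ⊨ S ≤ U, and equals the formula ⊥ otherwise. -/
open Classical

/-- A weight constraint of the form `S ≤ U`, with nonnegative weights. -/
structure UConstraint (α : Type) where
  S : List (RElem α × ℝ)
  U : EReal
  nonneg : ∀ p ∈ S, (0 : ℝ) ≤ p.2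

/-- `Z` satisfies `S ≤ U`. -/
def UConstraint.sat {α : Type} (Z : Set (Lit α)) (C : UConstraint α) : Prop :=
  (weightSum Z C.S : EReal) ≤ C.U

/-!
The reduct of `not F` is `⊤` if `not F` is satisfied and `⊥` otherwise, so the theorem amounts to
`[S ≤ U]` and `S ≤ U` being satisfied by the same sets of literals. Some index set `I` of satisfied rule
elements has weight exceeding `U` iff the largest such set does, because weights are nonnegative;
and the weight of the largest one is the sum that the semantics of `S ≤ U` compares with `U`.
-/

theorem exists_forall_mem_and_lt_iff_lt_filter {ι β : Type*} [Fintype ι] [Preorder β]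
    {g : Finset ι → β} (hg : Monotone g) (p : ι → Prop) [DecidablePred p] (u : β) :
    (∃ I, (∀ i ∈ I, p i) ∧ u < g I) ↔ u < g {i | p i} := by
  constructor
  · rintro ⟨I, hI, hu⟩
    have hsub : I ⊆ ({i | p i} : Finset ι) := fun i hi => by simpa using hI i hi
    exact hu.trans_le (hg hsub)
  · exact fun hu => ⟨_, by simp, hu⟩

section

variable {α : Type} (Z : Set (Lit α))

theorem Formula.sat_bigConj (Fs : List (Formula α)) :
    (bigConj Fs).sat Z ↔ ∀ F ∈ Fs, F.sat Z := by
  induction Fs with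
  | nil => simp [bigConj, Formula.sat]
  | cons F Fs ih => simp [bigConj, Formula.sat, ih]

theorem Formula.sat_bigDisj (Fs : List (Formula α)) :
    (bigDisj Fs).sat Z ↔ ∃ F ∈ Fs, F.sat Z := by
  induction Fs with
  | nil => simp [bigDisj, Formula.sat]
  | cons F Fs ih => simp [bigDisj, Formula.sat, ih]

theorem Formula.sat_angled {n : ℕ} (F : Fin n → Formula α) (X : Finset (Finset (Fin n))) :
    (angled F X).sat Z ↔ ∃ I ∈ X, ∀ i ∈ I, (F i).sat Z := by
  simp [angled, Formula.sat_bigDisj, Formula.sat_bigConj]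

theorem RElem.sat_toFormula (c : RElem α) : c.toFormula.sat Z ↔ c.sat Z := by
  cases c <;> rfl

theorem Formula.reduct_naf (F : Formula α) :
    F.naf.reduct Z = if F.naf.sat Z then .ftop else .fbot := by
  by_cases h : F.sat Z <;> simp [Formula.reduct, Formula.sat, h]

theorem weightSum_eq_sum_filter (S : List (RElem α × ℝ)) :
    weightSum Z S = ∑ i : Fin S.length with (S.get i).1.sat Z, (S.get i).2 := by
  rw [Finset.sum_filter]
  exact (Fin.sum_univ_fun_getElem S fun p => if p.1.sat Z then p.2 else 0).symm

theorem Formula.sat_trUpper {S : List (RElem α × ℝ)} (hS : ∀ p ∈ S, 0 ≤ p.2) (U : EReal) :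
    (trUpper S U).sat Z ↔ (weightSum Z S : EReal) ≤ U := by
  have weight_mono :
      Monotone fun I : Finset (Fin S.length) => ((∑ i ∈ I, (S.get i).2 : ℝ) : EReal) :=
    EReal.coe_strictMono.monotone.comp
      (Finset.sum_mono_set_of_nonneg fun i => hS _ (S.get_mem i))
  rw [weightSum_eq_sum_filter, ← not_lt,
    ← exists_forall_mem_and_lt_iff_lt_filter weight_mono fun i => (S.get i).1.sat Z]
  simp only [trUpper, Formula.sat, Formula.sat_angled, RElem.sat_toFormula, Finset.mem_filter,
    Finset.mem_univ, true_and, and_comm]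

end

theorem reduct_trUpper_eq_general {α : Type} (C : UConstraint α) (Z : Set (Lit α)) :
    (trUpper C.S C.U).reduct Z = if C.sat Z then Formula.ftop else Formula.fbot :=
  (Formula.reduct_naf Z _).trans (if_congr (Formula.sat_trUpper Z C.nonneg C.U) rfl rfl)

/-- For any constraint `S ≤ U` and any consistent set `Z` of literals, the reduct
`[S ≤ U]^Z` equals `⊤` if `Z ⊨ S ≤ U`, and `⊥` otherwise. -/
theorem reduct_trUpper_eq (C : UConstraint ℕ) (Z : Set (Lit ℕ)) (hZ : LitConsistent Z) :
    (trUpper C.S C.U).reduct Z = if C.sat Z then Formula.ftop else Formula.fbot :=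
  reduct_trUpper_eq_general C Z
end

section
/- Let Π₁ and Π₂ be programs with nested expressions such that the head of every rule in Π₂ is ⊥. A consistent set Z of literals is an answer set for Π₁ ∪ Π₂ if and only if Z is an answer set for Π₁ and Z ⊨ Π₂. -/
open Classical

/-!
Satisfaction of a formula without negation as failure is monotone in the set of literals, so a rule
`⊥ ← F` with such a body that holds in `Z` also holds in every subset of `Z`. The reduct of a set of
constraints consists of rules of this kind; adding it to the reduct of `P₁` therefore excludes no
subset of `Z` that competes with it for minimality, and only requires `Z` itself to satisfy it.
Since `Z` satisfies a program exactly when it satisfies the reduct relative to `Z`, this requirement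
is `Z ⊨ P₂`.
-/

section

variable {α : Type} {Y Z : Set (Lit α)} {P Q : Set (NRule α)}

namespace Formula

/-- Formulas without negation as failure; every reduct is one, and their satisfaction is monotone.
Classical negation is part of a literal, so it may occur. -/
inductive NafFree : Formula α → Prop
  | lit (l : Lit α) : NafFree (.lit l)
  | fbot : NafFree .fbot
  | ftop : NafFree .ftop
  | conj {F G : Formula α} : NafFree F → NafFree G → NafFree (.conj F G)
  | disj {F G : Formula α} : NafFree F → NafFree G → NafFree (.disj F G)

theorem NafFree.sat_mono {F : Formula α} (hF : F.NafFree) (hYZ : Y ⊆ Z) (hY : F.sat Y) :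
    F.sat Z := by
  induction hF with
  | lit l => exact hYZ hY
  | fbot => exact hY
  | ftop => exact hY
  | conj _ _ ihF ihG => exact hY.imp ihF ihG
  | disj _ _ ihF ihG => exact hY.imp ihF ihG

theorem nafFree_reduct (Z : Set (Lit α)) (F : Formula α) : (F.reduct Z).NafFree := by
  induction F with
  | lit l => exact .lit l
  | fbot => exact .fbot
  | ftop => exact .ftop
  | naf F =>
    rw [reduct]
    split_ifs
    · exact .fbot
    · exact .ftop
  | conj F G ihF ihG => exact .conj ihF ihG
  | disj F G ihF ihG => exact .disj ihF ihG

theorem sat_reduct_self (Z : Set (Lit α)) (F : Formula α) : (F.reduct Z).sat Z ↔ F.sat Z := by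
  induction F with
  | lit l => rfl
  | fbot => rfl
  | ftop => rfl
  | naf F => by_cases hF : F.sat Z <;> simp [reduct, sat, hF]
  | conj F G ihF ihG => exact and_congr ihF ihG
  | disj F G ihF ihG => exact or_congr ihF ihG

end Formula

theorem progSat_union : progSat Z (P ∪ Q) ↔ progSat Z P ∧ progSat Z Q :=
  forall₂_or_left

theorem progSat_anti_of_head_eq_fbot (hhead : ∀ r ∈ P, r.head = .fbot)
    (hbody : ∀ r ∈ P, r.body.NafFree) (hYZ : Y ⊆ Z) (hZ : progSat Z P) : progSat Y P := by
  intro r hr hY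
  have hbot : Formula.fbot.sat Z := hhead r hr ▸ hZ r hr ((hbody r hr).sat_mono hYZ hY)
  exact hbot.elim

theorem progReduct_union (Z : Set (Lit α)) (P Q : Set (NRule α)) :
    progReduct Z (P ∪ Q) = progReduct Z P ∪ progReduct Z Q :=
  Set.image_union _ P Q

theorem progSat_progReduct_self : progSat Z (progReduct Z P) ↔ progSat Z P := by
  simp only [progSat, progReduct, Set.forall_mem_image, Formula.sat_reduct_self]

theorem nafFree_body_of_mem_progReduct {r : NRule α} (hr : r ∈ progReduct Z P) :
    r.body.NafFree := by
  obtain ⟨s, -, rfl⟩ := hr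
  exact s.body.nafFree_reduct Z

theorem head_eq_fbot_of_mem_progReduct (hP : ∀ r ∈ P, r.head = .fbot) {r : NRule α}
    (hr : r ∈ progReduct Z P) : r.head = .fbot := by
  obtain ⟨s, hs, rfl⟩ := hr
  exact congrArg (Formula.reduct Z) (hP s hs)

theorem minimalSat_union_iff (hQ : progSat Z Q → ∀ Y ⊆ Z, progSat Y Q) :
    MinimalSat Z (P ∪ Q) ↔ MinimalSat Z P ∧ progSat Z Q := by
  simp only [MinimalSat, progSat_union]
  constructor
  · rintro ⟨hcons, ⟨hZP, hZQ⟩, hmin⟩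
    exact ⟨⟨hcons, hZP, fun Y hY hYP hYZ => hmin Y hY ⟨hYP, hQ hZQ Y hYZ⟩ hYZ⟩, hZQ⟩
  · rintro ⟨⟨hcons, hZP, hmin⟩, hZQ⟩
    exact ⟨hcons, ⟨hZP, hZQ⟩, fun Y hY hYPQ hYZ => hmin Y hY hYPQ.1 hYZ⟩

theorem answer_set_union_constraints_general (hQ : ∀ r ∈ Q, r.head = .fbot) :
    AnswerSet Z (P ∪ Q) ↔ AnswerSet Z P ∧ progSat Z Q := by
  have hreduct : progSat Z (progReduct Z Q) → ∀ Y ⊆ Z, progSat Y (progReduct Z Q) :=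
    fun hZ _ hYZ => progSat_anti_of_head_eq_fbot
      (fun _ => head_eq_fbot_of_mem_progReduct hQ) (fun _ => nafFree_body_of_mem_progReduct) hYZ hZ
  calc AnswerSet Z (P ∪ Q)
    _ ↔ MinimalSat Z (progReduct Z P ∪ progReduct Z Q) := by rw [AnswerSet, progReduct_union]
    _ ↔ AnswerSet Z P ∧ progSat Z (progReduct Z Q) := minimalSat_union_iff hreduct
    _ ↔ AnswerSet Z P ∧ progSat Z Q := and_congr_right' progSat_progReduct_self

end

/-- If the head of every rule in `P₂` is `⊥`, then a consistent set `Z` of literals is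
an answer set for `P₁ ∪ P₂` iff `Z` is an answer set for `P₁` and `Z ⊨ P₂`. -/
theorem answer_set_union_constraints (P₁ P₂ : Set (NRule ℕ))
    (h : ∀ r ∈ P₂, r.head = Formula.fbot)
    (Z : Set (Lit ℕ)) (hZ : LitConsistent Z) :
    AnswerSet Z (P₁ ∪ P₂) ↔ AnswerSet Z P₁ ∧ progSat Z P₂ :=
  answer_set_union_constraints_general h
end

section
/- (Completion Lemma) Let Π be a program with nested expressions, and let Q be a set of atoms none of which has a regular occurrence in the head of any rule of Π. For every q ∈ Q, let Def(q) be a formula. Then the program Π ∪ {q ← Def(q) : q ∈ Q} has the same answer sets as the program Π ∪ {q ← Def(q) : q ∈ Q} ∪ {Def(q) ← q : q ∈ Q}. -/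
open Classical

/-- The literals occurring in a formula (every occurrence of a literal is regular,
since literals are atomic in this syntax). -/
def Formula.lits {α : Type} : Formula α → Set (Lit α)
  | .lit l => {l}
  | .fbot => ∅
  | .ftop => ∅
  | .naf F => F.lits
  | .conj F G => F.lits ∪ G.lits
  | .disj F G => F.lits ∪ G.lits

/-! Fix `Z`. A model of the reduct of `P ∪ {q ← Def q}` is a consistent model `W` of `P^Z` that
is a pre-fixed point, within `Q`, of the monotone operator sending `W` to `{q | W ⊨ (Def q)^Z}`; the
rules `Def q ← q` turn "pre-fixed point" into "fixed point". As members of `Q` do not occur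
positively in the heads of `P`, a model of `P^Z` remains one when members of `Q` are removed from
it. Hence, by the Knaster–Tarski theorem applied with the literals of `W` outside `Q` held fixed,
every model of the smaller reduct contains a model of the larger one, and so the two reducts have
the same minimal models. -/

theorem exists_le_sdiff_le_inf_map_eq_inf {β : Type*} [CompleteBooleanAlgebra β] (f : β →o β)
    {a q : β} (h : q ⊓ f a ≤ a) : ∃ m ≤ a, a \ q ≤ m ∧ q ⊓ f m = q ⊓ m := by
  let g : β →o β := ⟨fun x => a \ q ⊔ q ⊓ f x,
    fun _ _ hxy => sup_le_sup_left (inf_le_inf_left q (f.mono hxy)) _⟩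
  have hg : a \ q ⊔ q ⊓ f g.lfp = g.lfp := g.map_lfp
  refine ⟨g.lfp, g.lfp_le (sup_le sdiff_le h), le_sup_left.trans hg.le, ?_⟩
  calc q ⊓ f g.lfp = q ⊓ (a \ q ⊔ q ⊓ f g.lfp) := by
        rw [inf_sup_left, inf_sdiff_self_right, bot_sup_eq, inf_left_idem]
    _ = q ⊓ g.lfp := by rw [hg]

section Reduct

variable {α : Type} {Z W W' : Set (Lit α)} {P P' : Set (NRule α)}

theorem LitConsistent.subset (hW' : LitConsistent W') (h : W ⊆ W') : LitConsistent W :=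
  fun a ha => hW' a ⟨h ha.1, h ha.2⟩

theorem answerSet_iff_minimal :
    AnswerSet Z P ↔ Minimal (fun W => LitConsistent W ∧ progSat W (progReduct Z P)) Z := by
  simp only [AnswerSet, MinimalSat, minimal_iff, and_imp, and_assoc, eq_comm (a := Z)]

/-- The literals with a strictly positive occurrence in a formula, that is, an occurrence outside
the scope of every `naf`; in particular `naf (naf (lit l))` has none. These are the only literals on
which satisfaction of a reduct of the formula can depend. -/
def Formula.positiveLits : Formula α → Set (Lit α)
  | .lit l => {l}
  | .fbot => ∅
  | .ftop => ∅
  | .naf _ => ∅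
  | .conj F G => F.positiveLits ∪ G.positiveLits
  | .disj F G => F.positiveLits ∪ G.positiveLits

theorem Formula.positiveLits_subset_lits (F : Formula α) : F.positiveLits ⊆ F.lits := by
  induction F with
  | lit l => exact subset_rfl
  | fbot | ftop => exact subset_rfl
  | naf F _ => exact Set.empty_subset _
  | conj F G ihF ihG | disj F G ihF ihG => exact Set.union_subset_union ihF ihG

theorem Formula.sat_reduct_of_inter_positiveLits_subset {F : Formula α}
    (h : W ∩ F.positiveLits ⊆ W') (hF : (F.reduct Z).sat W) : (F.reduct Z).sat W' := by
  induction F with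
  | lit l => exact h ⟨hF, rfl⟩
  | fbot | ftop => exact hF
  | naf F _ =>
    rw [Formula.reduct] at hF ⊢
    split_ifs at hF ⊢ <;> exact hF
  | conj F G ihF ihG | disj F G ihF ihG =>
    rw [Formula.positiveLits, Set.inter_union_distrib_left, Set.union_subset_iff] at h
    exact hF.imp (ihF h.1) (ihG h.2)

theorem Formula.sat_reduct_mono {F : Formula α} (h : W ⊆ W') (hF : (F.reduct Z).sat W) :
    (F.reduct Z).sat W' :=
  sat_reduct_of_inter_positiveLits_subset (Set.inter_subset_left.trans h) hF

theorem progSat_progReduct :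
    progSat W (progReduct Z P) ↔
      ∀ r ∈ P, (r.body.reduct Z).sat W → (r.head.reduct Z).sat W :=
  Set.forall_mem_image

theorem progSat_progReduct_union :
    progSat W (progReduct Z (P ∪ P')) ↔
      progSat W (progReduct Z P) ∧ progSat W (progReduct Z P') := by
  simp only [progSat_progReduct, Set.mem_union, or_imp, forall_and]

theorem progSat_progReduct_of_diff_subset {Q : Set (Lit α)}
    (hQ : ∀ q ∈ Q, ∀ r ∈ P, q ∉ r.head.positiveLits) (hsub : W ⊆ W') (hdiff : W' \ Q ⊆ W)
    (hW' : progSat W' (progReduct Z P)) : progSat W (progReduct Z P) := by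
  rw [progSat_progReduct] at hW' ⊢
  intro r hr hbody
  have hhead : (r.head.reduct Z).sat W' := hW' r hr (Formula.sat_reduct_mono hsub hbody)
  exact Formula.sat_reduct_of_inter_positiveLits_subset
    (fun l hl => hdiff ⟨hl.1, fun hlQ => hQ l hlQ r hr hl.2⟩) hhead

/-- The immediate-consequence operator of the reducts relative to `Z` of the rules `l ← Def l`, for
all literals `l`. It is bundled as a monotone map in order to have least fixed points. -/
def immediateConsequence (Z : Set (Lit α)) (Def : Lit α → Formula α) :
    Set (Lit α) →o Set (Lit α) where
  toFun W := {l | ((Def l).reduct Z).sat W}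
  monotone' _ _ h _ := Formula.sat_reduct_mono h

variable {Q : Set (Lit α)} {Def : Lit α → Formula α}

theorem progSat_progReduct_definitions :
    progSat W (progReduct Z {r | ∃ q ∈ Q, r = ⟨.lit q, Def q⟩}) ↔
      Q ∩ immediateConsequence Z Def W ⊆ W := by
  rw [progSat_progReduct]
  constructor
  · exact fun h q hq => h _ ⟨q, hq.1, rfl⟩ hq.2
  · rintro h _ ⟨q, hq, rfl⟩ hbody
    exact h ⟨hq, hbody⟩

theorem progSat_progReduct_converse_definitions :
    progSat W (progReduct Z {r | ∃ q ∈ Q, r = ⟨Def q, .lit q⟩}) ↔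
      Q ∩ W ⊆ immediateConsequence Z Def W := by
  rw [progSat_progReduct]
  constructor
  · exact fun h q hq => h _ ⟨q, hq.1, rfl⟩ hq.2
  · rintro h _ ⟨q, hq, rfl⟩ hbody
    exact h ⟨hq, hbody⟩

theorem exists_subset_progSat_progReduct_completion
    (hQ : ∀ q ∈ Q, ∀ r ∈ P, q ∉ r.head.positiveLits)
    (hW : progSat W (progReduct Z (P ∪ {r | ∃ q ∈ Q, r = ⟨.lit q, Def q⟩}))) :
    ∃ M ⊆ W, progSat M (progReduct Z
      ((P ∪ {r | ∃ q ∈ Q, r = ⟨.lit q, Def q⟩}) ∪ {r | ∃ q ∈ Q, r = ⟨Def q, .lit q⟩})) := by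
  simp only [progSat_progReduct_union, progSat_progReduct_definitions,
    progSat_progReduct_converse_definitions] at hW ⊢
  obtain ⟨hP, hprefixed⟩ := hW
  obtain ⟨M, hMW, hdiff, hfixed⟩ :=
    exists_le_sdiff_le_inf_map_eq_inf (immediateConsequence Z Def) hprefixed
  exact ⟨M, hMW, ⟨progSat_progReduct_of_diff_subset hQ hMW hdiff hP,
    hfixed.trans_subset Set.inter_subset_right⟩, hfixed.symm.trans_subset Set.inter_subset_right⟩

end Reduct

theorem completion_lemma_general {α : Type} (P : Set (NRule α)) (Q : Set (Lit α))
    (Def : Lit α → Formula α) (hQ : ∀ q ∈ Q, ∀ r ∈ P, q ∉ r.head.positiveLits)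
    (Z : Set (Lit α)) :
    AnswerSet Z (P ∪ {r | ∃ q ∈ Q, r = ⟨.lit q, Def q⟩}) ↔
      AnswerSet Z ((P ∪ {r | ∃ q ∈ Q, r = ⟨.lit q, Def q⟩}) ∪
        {r | ∃ q ∈ Q, r = ⟨Def q, .lit q⟩}) := by
  rw [answerSet_iff_minimal, answerSet_iff_minimal]
  apply minimal_iff_minimal_of_imp_of_forall
  · exact fun W hW => hW.imp_right fun hsat => (progSat_progReduct_union.1 hsat).1
  · rintro W ⟨hcons, hsat⟩
    obtain ⟨M, hMW, hM⟩ := exists_subset_progSat_progReduct_completion hQ hsat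
    exact ⟨M, hMW, hcons.subset hMW, hM⟩

/-- Completion Lemma: if no atom of `Q` has a regular occurrence in the head of a rule
of `P` (a regular occurrence of atom `q` being an occurrence of the literal `q`, not of
`¬ q`), then `P ∪ {q ← Def q : q ∈ Q}` has the same answer sets as
`P ∪ {q ← Def q : q ∈ Q} ∪ {Def q ← q : q ∈ Q}`. -/
theorem completion_lemma (P : Set (NRule ℕ)) (Q : Set ℕ) (Def : ℕ → Formula ℕ)
    (hQ : ∀ q ∈ Q, ∀ r ∈ P, Lit.pos q ∉ r.head.lits) :
    ∀ Z : Set (Lit ℕ),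
      AnswerSet Z (P ∪ {r : NRule ℕ | ∃ q ∈ Q, r = ⟨.lit (.pos q), Def q⟩}) ↔
      AnswerSet Z ((P ∪ {r : NRule ℕ | ∃ q ∈ Q, r = ⟨.lit (.pos q), Def q⟩}) ∪
        {r : NRule ℕ | ∃ q ∈ Q, r = ⟨Def q, .lit (.pos q)⟩}) := by
  simpa [Lit.atom] using completion_lemma_general P (Lit.pos '' Q) (fun l => Def l.atom)
    (Set.forall_mem_image.2 fun q hq r hr h => hQ q hq r hr (r.head.positiveLits_subset_lits h))
end

section
/- Let Π be a program with nested expressions not containing negation as failure, let Z be a consistent set of literals, and let Z' be a subset of Z. If no literal in Z ∖ Z' has a regular occurrence in the head of any rule of Π, and Z ⊨ Π, then Z' ⊨ Π. -/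
open Classical

/-- A formula does not contain negation as failure. -/
def Formula.nafFree {α : Type} : Formula α → Prop
  | .lit _ => True
  | .fbot => True
  | .ftop => True
  | .naf _ => False
  | .conj F G => F.nafFree ∧ G.nafFree
  | .disj F G => F.nafFree ∧ G.nafFree

namespace Formula

variable {α : Type} {Z Z' : Set (Lit α)}

theorem sat_congr (F : Formula α) (h : ∀ l ∈ F.lits, l ∈ Z ↔ l ∈ Z') :
    F.sat Z ↔ F.sat Z' := by
  induction F with
  | lit l => exact h l rfl
  | fbot => exact Iff.rfl
  | ftop => exact Iff.rfl
  | naf F ih => exact not_congr (ih h)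
  | conj F G ihF ihG =>
    exact and_congr (ihF fun l hl => h l (Or.inl hl)) (ihG fun l hl => h l (Or.inr hl))
  | disj F G ihF ihG =>
    exact or_congr (ihF fun l hl => h l (Or.inl hl)) (ihG fun l hl => h l (Or.inr hl))

theorem nafFree.monotone_sat {F : Formula α} (hF : F.nafFree) : Monotone fun Z => F.sat Z := by
  intro Z' Z hsub
  induction F with
  | lit l => exact @hsub l
  | fbot => exact id
  | ftop => exact id
  | naf F => exact hF.elim
  | conj F G ihF ihG => exact And.imp (ihF hF.1) (ihG hF.2)
  | disj F G ihF ihG => exact Or.imp (ihF hF.1) (ihG hF.2)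

end Formula

theorem monotone_lemma_general {α : Type} {P : Set (NRule α)} {Z Z' : Set (Lit α)}
    (hbody : ∀ r ∈ P, r.body.nafFree) (hsub : Z' ⊆ Z)
    (hhead : ∀ l ∈ Z \ Z', ∀ r ∈ P, l ∉ r.head.lits) (hsat : progSat Z P) :
    progSat Z' P := by
  intro r hr hbodyZ'
  have hbodyZ : r.body.sat Z := (hbody r hr).monotone_sat hsub hbodyZ'
  have hagree : ∀ l ∈ r.head.lits, l ∈ Z ↔ l ∈ Z' := fun l hl =>
    ⟨fun hlZ => by_contra fun hlZ' => hhead l ⟨hlZ, hlZ'⟩ r hr hl, @hsub l⟩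
  exact (r.head.sat_congr hagree).mp (hsat r hr hbodyZ)

/-- Let `P` be a program without negation as failure, `Z` a consistent set of literals
and `Z' ⊆ Z`. If no literal of `Z ∖ Z'` has a (regular) occurrence in the head of a rule
of `P`, and `Z ⊨ P`, then `Z' ⊨ P`. -/
theorem monotone_lemma (P : Set (NRule ℕ))
    (hnaf : ∀ r ∈ P, r.head.nafFree ∧ r.body.nafFree)
    (Z Z' : Set (Lit ℕ)) (hZ : LitConsistent Z) (hsub : Z' ⊆ Z)
    (hhead : ∀ l ∈ Z \ Z', ∀ r ∈ P, l ∉ r.head.lits)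
    (hsat : progSat Z P) :
    progSat Z' P :=
  monotone_lemma_general (fun r hr => (hnaf r hr).2) hsub hhead hsat
end

section
/- Let Π be a program with nested expressions, and let S be the set of all literals that have a regular occurrence in Π within the scope of negation as failure. For any consistent sets Z₁ and Z₂ of literals, if Z₁ ∩ S = Z₂ ∩ S then Π^{Z₁} = Π^{Z₂}. -/
open Classical

/-- The literals having a (regular) occurrence in a formula within the scope of
negation as failure. -/
def Formula.litsUnderNaf {α : Type} : Formula α → Set (Lit α)
  | .lit _ => ∅
  | .fbot => ∅
  | .ftop => ∅
  | .naf F => F.lits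
  | .conj F G => F.litsUnderNaf ∪ G.litsUnderNaf
  | .disj F G => F.litsUnderNaf ∪ G.litsUnderNaf

namespace Formula

variable {α : Type} {Z₁ Z₂ : Set (Lit α)} {F : Formula α}

theorem sat_congr_s19 (h : ∀ l ∈ F.lits, (l ∈ Z₁ ↔ l ∈ Z₂)) : F.sat Z₁ ↔ F.sat Z₂ := by
  induction F with
  | lit l => exact h l rfl
  | fbot => exact Iff.rfl
  | ftop => exact Iff.rfl
  | naf F ih => exact not_congr (ih h)
  | conj F G ihF ihG =>
    exact and_congr (ihF fun l hl => h l (.inl hl)) (ihG fun l hl => h l (.inr hl))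
  | disj F G ihF ihG =>
    exact or_congr (ihF fun l hl => h l (.inl hl)) (ihG fun l hl => h l (.inr hl))

theorem reduct_congr (h : ∀ l ∈ F.litsUnderNaf, (l ∈ Z₁ ↔ l ∈ Z₂)) :
    F.reduct Z₁ = F.reduct Z₂ := by
  induction F with
  | lit l => rfl
  | fbot => rfl
  | ftop => rfl
  | naf F =>
    have hsat : F.sat Z₁ ↔ F.sat Z₂ := sat_congr_s19 h
    simp only [reduct, hsat]
  | conj F G ihF ihG =>
    exact congrArg₂ conj (ihF fun l hl => h l (.inl hl)) (ihG fun l hl => h l (.inr hl))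
  | disj F G ihF ihG =>
    exact congrArg₂ disj (ihF fun l hl => h l (.inl hl)) (ihG fun l hl => h l (.inr hl))

end Formula

theorem same_reduct_general {α : Type} (P : Set (NRule α)) (Z₁ Z₂ : Set (Lit α))
    (hagree : Z₁ ∩ (⋃ r ∈ P, r.head.litsUnderNaf ∪ r.body.litsUnderNaf)
            = Z₂ ∩ (⋃ r ∈ P, r.head.litsUnderNaf ∪ r.body.litsUnderNaf)) :
    progReduct Z₁ P = progReduct Z₂ P := by
  have mem_iff : ∀ r ∈ P, ∀ l ∈ r.head.litsUnderNaf ∪ r.body.litsUnderNaf,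
      (l ∈ Z₁ ↔ l ∈ Z₂) := fun r hr l hl =>
    and_congr_left_iff.mp (Set.ext_iff.mp hagree l) (Set.mem_biUnion hr hl)
  refine Set.image_congr fun r hr => congrArg₂ NRule.mk ?_ ?_
  · exact Formula.reduct_congr fun l hl => mem_iff r hr l (.inl hl)
  · exact Formula.reduct_congr fun l hl => mem_iff r hr l (.inr hl)

/-- If two consistent sets of literals agree on the literals occurring in `P` within the
scope of negation as failure, then the reducts of `P` relative to them coincide. -/
theorem same_reduct (P : Set (NRule ℕ)) (Z₁ Z₂ : Set (Lit ℕ))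
    (h₁ : LitConsistent Z₁) (h₂ : LitConsistent Z₂)
    (hagree : Z₁ ∩ (⋃ r ∈ P, r.head.litsUnderNaf ∪ r.body.litsUnderNaf)
            = Z₂ ∩ (⋃ r ∈ P, r.head.litsUnderNaf ∪ r.body.litsUnderNaf)) :
    progReduct Z₁ P = progReduct Z₂ P :=
  same_reduct_general P Z₁ Z₂ hagree
end
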